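/- Let d ≥ 3 and 1 < p ≤ d/(d-2), and let q be the conjugate exponent (1/p + 1/q = 1), so that d ≤ 2q. Then χ_{d,p} = inf{ (1/2)‖∇ψ‖₂² : ψ ∈ H¹(ℝ^d), ‖ψ‖₂ = 1 = ‖ψ‖_{2p} } is strictly positive. -/

import Mathlib

open MeasureTheory

noncomputable def gradNormSq {d : ℕ} (ψ : (Fin d → ℝ) → ℝ) (x : Fin d → ℝ) : ℝ :=
  ∑ i, (fderiv ℝ ψ x (Pi.single i 1)) ^ 2

def chiSet (d : ℕ) (p : ℝ) : Set ℝ :=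
  {E | ∃ ψ : (Fin d → ℝ) → ℝ, Differentiable ℝ ψ ∧
    Integrable (fun x => ψ x ^ 2) ∧ Integrable (gradNormSq ψ) ∧
    Integrable (fun x => |ψ x| ^ (2 * p)) ∧
    (∫ x, ψ x ^ 2) = 1 ∧ (∫ x, |ψ x| ^ (2 * p)) = 1 ∧
    E = (1 / 2) * ∫ x, gradNormSq ψ x}

/-!
Apply the `L¹` Gagliardo–Nirenberg inequality `‖u‖_{d/(d-1)} ≤ ‖∇u‖₁` to `u = |ψ| ^ (p + 1)`. By
Cauchy–Schwarz `‖∇u‖₁ ≤ (p + 1) ‖ψ‖_{2p}^p ‖∇ψ‖₂`, which is at most `(p + 1) ‖∇ψ‖₂` under the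
normalization `‖ψ‖_{2p} = 1`, while the left-hand side is a power of the moment of order
`(p + 1) d / (d - 1)` of `|ψ|`. The condition on `p` says precisely that this order is at least
`2p`; since the moments of orders `2 < 2p` are both `1`, log-convexity of the moments bounds it
below by `1`. Hence `‖∇ψ‖₂ ≥ 1 / (p + 1)`, up to a dimensional constant coming from the choice of
norm on `ℝ^d`. Compactly supported functions can be normalized by rescaling amplitude and argument,
so the infimum is not over the empty set, where Lean's `sInf` would be `0`.
-/

open Module
open scoped ENNReal Topology

section Moments

variable {α : Type*} [MeasurableSpace α] {μ : Measure α} {f : α → ℝ≥0∞}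

theorem lintegral_rpow_le_rpow_mul_rpow (hf : AEMeasurable f μ) {a b v w : ℝ} (ha : 0 ≤ a)
    (hb : 0 ≤ b) (hv : 0 ≤ v) (hw : 0 ≤ w) (hvw : v + w = 1) :
    ∫⁻ x, f x ^ (v * a + w * b) ∂μ ≤ (∫⁻ x, f x ^ a ∂μ) ^ v * (∫⁻ x, f x ^ b ∂μ) ^ w := by
  calc ∫⁻ x, f x ^ (v * a + w * b) ∂μ = ∫⁻ x, (f x ^ a) ^ v * (f x ^ b) ^ w ∂μ := by
        congr! 2 with x
        rw [← ENNReal.rpow_mul, ← ENNReal.rpow_mul, mul_comm a, mul_comm b,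
          ENNReal.rpow_add_of_nonneg _ _ (by positivity) (by positivity)]
    _ ≤ (∫⁻ x, f x ^ a ∂μ) ^ v * (∫⁻ x, f x ^ b ∂μ) ^ w :=
        ENNReal.lintegral_mul_norm_pow_le (hf.pow_const a) (hf.pow_const b) hv hw hvw

theorem one_le_lintegral_rpow_of_eq_one (hf : AEMeasurable f μ) {a b c : ℝ} (ha : 0 ≤ a)
    (hab : a < b) (hbc : b ≤ c) (hfa : ∫⁻ x, f x ^ a ∂μ = 1) (hfb : ∫⁻ x, f x ^ b ∂μ = 1) :
    1 ≤ ∫⁻ x, f x ^ c ∂μ := by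
  have hac : 0 < c - a := by linarith
  have hw : 0 < (b - a) / (c - a) := div_pos (by linarith) hac
  have hexp : (c - b) / (c - a) * a + (b - a) / (c - a) * c = b := by field_simp; ring
  have hconv := lintegral_rpow_le_rpow_mul_rpow hf ha (by linarith : 0 ≤ c)
    (v := (c - b) / (c - a)) (div_nonneg (by linarith) hac.le) hw.le (by field_simp; ring)
  rw [hexp, hfa, hfb, ENNReal.one_rpow, one_mul] at hconv
  contrapose! hconv
  exact ENNReal.rpow_lt_one hconv hw

theorem lintegral_enorm_rpow_eq_ofReal {F : Type*} [NormedAddCommGroup F] {g : α → F} {s : ℝ}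
    (hs : 0 ≤ s) (hg : Integrable (fun x => ‖g x‖ ^ s) μ) :
    ∫⁻ x, ‖g x‖ₑ ^ s ∂μ = ENNReal.ofReal (∫ x, ‖g x‖ ^ s ∂μ) := by
  rw [ofReal_integral_eq_lintegral_ofReal hg (.of_forall fun x => by positivity)]
  simp_rw [← ENNReal.ofReal_rpow_of_nonneg (norm_nonneg _) hs, ofReal_norm]

end Moments

section GagliardoNirenberg

variable {ι F : Type*} [Fintype ι] [NormedAddCommGroup F] [NormedSpace ℝ F] {u : (ι → ℝ) → F}

theorem enorm_deriv_comp_update_le_enorm_fderiv [DecidableEq ι] (hu : Differentiable ℝ u)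
    (x : ι → ℝ) (i : ι) (t : ℝ) :
    ‖deriv (fun s => u (Function.update x i s)) t‖ₑ ≤ ‖fderiv ℝ u (Function.update x i t)‖ₑ := by
  have hderiv : HasDerivAt (fun s => u (Function.update x i s))
      (fderiv ℝ u (Function.update x i t) (Pi.single i 1)) t :=
    (hu _).hasFDerivAt.comp_hasDerivAt t (hasDerivAt_update x i t)
  rw [hderiv.deriv]
  exact (ContinuousLinearMap.le_opENorm _ _).trans_eq (by simp [Pi.enorm_single])

variable [CompleteSpace F]

theorem enorm_le_lintegral_enorm_deriv {v : ℝ → F} (hv : Differentiable ℝ v)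
    (hvi : Integrable v) (t : ℝ) : ‖v t‖ₑ ≤ ∫⁻ s, ‖deriv v s‖ₑ := by
  by_cases hfin : ∫⁻ s, ‖deriv v s‖ₑ = ∞
  · simp [hfin]
  have hderiv : ∀ s ∈ Set.Iic t, HasDerivAt v (deriv v s) s := fun s _ => (hv s).hasDerivAt
  have hv'i : IntegrableOn (deriv v) (Set.Iic t) :=
    Integrable.integrableOn ⟨aestronglyMeasurable_deriv v _, lt_top_iff_ne_top.2 hfin⟩
  have hlim : Filter.Tendsto v Filter.atBot (𝓝 0) :=
    tendsto_zero_of_hasDerivAt_of_integrableOn_Iic hderiv hv'i hvi.integrableOn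
  calc ‖v t‖ₑ = ‖∫ s in Set.Iic t, deriv v s‖ₑ := by
        rw [integral_Iic_of_hasDerivAt_of_tendsto' hderiv hv'i hlim, sub_zero]
    _ ≤ ∫⁻ s in Set.Iic t, ‖deriv v s‖ₑ := enorm_integral_le_lintegral_enorm _
    _ ≤ ∫⁻ s, ‖deriv v s‖ₑ := setLIntegral_le_lintegral _ _

-- The term `ε * ‖v s‖ₑ` makes the bound trivial unless `v` is integrable, so that it holds on every
-- line in `ι → ℝ` and not merely on almost every one.
theorem enorm_le_lintegral_mul_enorm_add_enorm_deriv {v : ℝ → F} (hv : Differentiable ℝ v)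
    {ε : ℝ≥0∞} (hε : ε ≠ 0) (t : ℝ) : ‖v t‖ₑ ≤ ∫⁻ s, (ε * ‖v s‖ₑ + ‖deriv v s‖ₑ) := by
  by_cases hvi : Integrable v
  · exact (enorm_le_lintegral_enorm_deriv hv hvi t).trans (lintegral_mono fun s => le_add_self)
  · have htop : ∫⁻ s, ‖v s‖ₑ = ∞ := by
      by_contra hfin
      exact hvi ⟨hv.continuous.aestronglyMeasurable, lt_top_iff_ne_top.2 hfin⟩
    have hvm : Measurable fun s => ‖v s‖ₑ := hv.continuous.enorm.measurable
    rw [lintegral_add_left (hvm.const_mul ε), lintegral_const_mul ε hvm, htop,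
      ENNReal.mul_top hε, top_add]
    exact le_top

variable {r : ℝ}

theorem lintegral_enorm_rpow_le_lintegral_mul_enorm_add_enorm_fderiv_rpow
    (hr : (Fintype.card ι : ℝ).HolderConjugate r) (hu : Differentiable ℝ u) {ε : ℝ≥0∞}
    (hε : ε ≠ 0) :
    ∫⁻ x, ‖u x‖ₑ ^ r ≤ (∫⁻ x, (ε * ‖u x‖ₑ + ‖fderiv ℝ u x‖ₑ)) ^ r := by
  classical
  set f : (ι → ℝ) → ℝ≥0∞ := fun x => ε * ‖u x‖ₑ + ‖fderiv ℝ u x‖ₑ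
  have hcard : (0 : ℝ) < Fintype.card ι - 1 := sub_pos.2 hr.lt
  have hf : Measurable f :=
    (hu.continuous.enorm.measurable.const_mul ε).add (measurable_fderiv ℝ u).enorm
  have hline (x : ι → ℝ) (i : ι) : ‖u x‖ₑ ≤ ∫⁻ t, f (Function.update x i t) := by
    have hv : Differentiable ℝ fun t => u (Function.update x i t) := fun t =>
      (hu _).comp t (hasDerivAt_update x i t).differentiableAt
    calc ‖u x‖ₑ = ‖u (Function.update x i (x i))‖ₑ := by rw [Function.update_eq_self]
      _ ≤ ∫⁻ t, (ε * ‖u (Function.update x i t)‖ₑ +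
            ‖deriv (fun s => u (Function.update x i s)) t‖ₑ) :=
          enorm_le_lintegral_mul_enorm_add_enorm_deriv hv hε (x i)
      _ ≤ ∫⁻ t, f (Function.update x i t) := lintegral_mono fun t =>
          add_le_add_right (enorm_deriv_comp_update_le_enorm_fderiv hu x i t) _
  calc ∫⁻ x, ‖u x‖ₑ ^ r
      = ∫⁻ x, ∏ _i : ι, ‖u x‖ₑ ^ (1 / ((Fintype.card ι : ℝ) - 1)) := by
        congr! 2 with x
        rw [Finset.prod_const, ← ENNReal.rpow_natCast, ← ENNReal.rpow_mul, hr.conjugate_eq,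
          Finset.card_univ, one_div_mul_eq_div]
    _ ≤ ∫⁻ x, ∏ i, (∫⁻ t, f (Function.update x i t)) ^ (1 / ((Fintype.card ι : ℝ) - 1)) := by
        gcongr with x i
        exact hline x i
    _ ≤ (∫⁻ x, f x) ^ r := lintegral_prod_lintegral_pow_le _ hr hf

theorem lintegral_enorm_rpow_le_lintegral_enorm_fderiv_rpow
    (hr : (Fintype.card ι : ℝ).HolderConjugate r) (hu : Differentiable ℝ u)
    (hui : Integrable u) :
    ∫⁻ x, ‖u x‖ₑ ^ r ≤ (∫⁻ x, ‖fderiv ℝ u x‖ₑ) ^ r := by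
  have hum : Measurable fun x => ‖u x‖ₑ := hu.continuous.enorm.measurable
  have hbound : ∀ᶠ ε : ℝ≥0∞ in 𝓝[>] 0,
      ∫⁻ x, ‖u x‖ₑ ^ r ≤ (ε * (∫⁻ x, ‖u x‖ₑ) + ∫⁻ x, ‖fderiv ℝ u x‖ₑ) ^ r := by
    filter_upwards [self_mem_nhdsWithin] with ε hε
    rw [← lintegral_const_mul ε hum, ← lintegral_add_left (hum.const_mul ε)]
    exact lintegral_enorm_rpow_le_lintegral_mul_enorm_add_enorm_fderiv_rpow hr hu (ne_of_gt hε)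
  have hlim : Filter.Tendsto
      (fun ε : ℝ≥0∞ => (ε * (∫⁻ x, ‖u x‖ₑ) + ∫⁻ x, ‖fderiv ℝ u x‖ₑ) ^ r) (𝓝[>] 0)
      (𝓝 ((0 * (∫⁻ x, ‖u x‖ₑ) + ∫⁻ x, ‖fderiv ℝ u x‖ₑ) ^ r)) := by
    have hε : Filter.Tendsto (fun ε : ℝ≥0∞ => ε) (𝓝[>] 0) (𝓝 0) := nhdsWithin_le_nhds
    exact ((ENNReal.Tendsto.mul_const hε (.inr hui.2.ne)).add_const _).ennrpow_const r
  simpa using ge_of_tendsto hlim hbound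

end GagliardoNirenberg

section Hilbert

variable {H : Type*} [NormedAddCommGroup H] [InnerProductSpace ℝ H] [CompleteSpace H]

theorem lintegral_enorm_fderiv_norm_rpow_le {E : Type*} [NormedAddCommGroup E] [NormedSpace ℝ E]
    [MeasurableSpace E] [OpensMeasurableSpace E] {μ : Measure E} {ψ : E → H}
    (hψ : Differentiable ℝ ψ) {s : ℝ} (hs : 1 < s) {a b : ℝ} (hab : a.HolderConjugate b) :
    ∫⁻ x, ‖fderiv ℝ (fun y => ‖ψ y‖ ^ s) x‖ₑ ∂μ ≤ ENNReal.ofReal s *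
      ((∫⁻ x, ‖ψ x‖ₑ ^ ((s - 1) * a) ∂μ) ^ (1 / a) *
        (∫⁻ x, ‖fderiv ℝ ψ x‖ₑ ^ b ∂μ) ^ (1 / b)) := by
  lift s to NNReal using by linarith
  have hψm : Measurable fun x => ‖ψ x‖ₑ := hψ.continuous.enorm.measurable
  have hψ'm : Measurable fun x => ‖fderiv ℝ ψ x‖ₑ := (measurable_fderiv ℝ ψ).enorm
  calc ∫⁻ x, ‖fderiv ℝ (fun y => ‖ψ y‖ ^ (s : ℝ)) x‖ₑ ∂μ
      ≤ ∫⁻ x, s * (‖ψ x‖ₑ ^ ((s : ℝ) - 1) * ‖fderiv ℝ ψ x‖ₑ) ∂μ := lintegral_mono fun x =>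
        (enorm_fderiv_norm_rpow_le hψ (mod_cast hs)).trans_eq (mul_assoc ..)
    _ = s * ∫⁻ x, ‖ψ x‖ₑ ^ ((s : ℝ) - 1) * ‖fderiv ℝ ψ x‖ₑ ∂μ :=
        lintegral_const_mul _ ((hψm.pow_const _).mul hψ'm)
    _ ≤ s * ((∫⁻ x, (‖ψ x‖ₑ ^ ((s : ℝ) - 1)) ^ a ∂μ) ^ (1 / a) *
          (∫⁻ x, ‖fderiv ℝ ψ x‖ₑ ^ b ∂μ) ^ (1 / b)) := by
        gcongr
        exact ENNReal.lintegral_mul_le_Lp_mul_Lq μ hab (hψm.pow_const _).aemeasurable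
          hψ'm.aemeasurable
    _ = _ := by simp_rw [← ENNReal.rpow_mul, ENNReal.ofReal_coe_nnreal]

variable {ι : Type*} [Fintype ι] {ψ : (ι → ℝ) → H}

theorem lintegral_enorm_rpow_mul_le (hψ : Differentiable ℝ ψ) {r s a b : ℝ}
    (hr : (Fintype.card ι : ℝ).HolderConjugate r) (hs : 1 < s) (hab : a.HolderConjugate b)
    (hψs : ∫⁻ x, ‖ψ x‖ₑ ^ s ≠ ∞) :
    ∫⁻ x, ‖ψ x‖ₑ ^ (s * r) ≤ (ENNReal.ofReal s *
      ((∫⁻ x, ‖ψ x‖ₑ ^ ((s - 1) * a)) ^ (1 / a) *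
        (∫⁻ x, ‖fderiv ℝ ψ x‖ₑ ^ b) ^ (1 / b))) ^ r := by
  have hpow (x : ι → ℝ) : ‖‖ψ x‖ ^ s‖ₑ = ‖ψ x‖ₑ ^ s := by
    rw [Real.enorm_rpow_of_nonneg (norm_nonneg _) (by linarith), enorm_norm]
  have hdiff : Differentiable ℝ fun x => ‖ψ x‖ ^ s := hψ.norm_rpow hs
  have hint : Integrable fun x => ‖ψ x‖ ^ s :=
    ⟨hdiff.continuous.aestronglyMeasurable, by
      simpa only [HasFiniteIntegral, hpow] using lt_top_iff_ne_top.2 hψs⟩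
  calc ∫⁻ x, ‖ψ x‖ₑ ^ (s * r) = ∫⁻ x, ‖‖ψ x‖ ^ s‖ₑ ^ r := by
        simp_rw [hpow, ENNReal.rpow_mul]
    _ ≤ (∫⁻ x, ‖fderiv ℝ (fun y => ‖ψ y‖ ^ s) x‖ₑ) ^ r :=
        lintegral_enorm_rpow_le_lintegral_enorm_fderiv_rpow hr hdiff hint
    _ ≤ _ := ENNReal.rpow_le_rpow (lintegral_enorm_fderiv_norm_rpow_le hψ hs hab)
        hr.symm.nonneg

theorem one_le_mul_lintegral_enorm_fderiv_sq (hι : 2 ≤ Fintype.card ι)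
    (hψ : Differentiable ℝ ψ) {p : ℝ} (hp : 1 < p)
    (hpι : p * ((Fintype.card ι : ℝ) - 2) ≤ Fintype.card ι)
    (h2 : ∫⁻ x, ‖ψ x‖ₑ ^ (2 : ℝ) = 1) (h2p : ∫⁻ x, ‖ψ x‖ₑ ^ (2 * p) = 1) :
    1 ≤ ENNReal.ofReal (p + 1) ^ (2 : ℝ) * ∫⁻ x, ‖fderiv ℝ ψ x‖ₑ ^ (2 : ℝ) := by
  have hn : (2 : ℝ) ≤ Fintype.card ι := by exact_mod_cast hι
  set n : ℝ := (Fintype.card ι : ℝ)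
  have hr : n.HolderConjugate (n / (n - 1)) := .conjExponent (by linarith)
  have hψm : AEMeasurable fun x => ‖ψ x‖ₑ := hψ.continuous.enorm.aemeasurable
  have horder : 2 * p ≤ (p + 1) * (n / (n - 1)) := by
    rw [← mul_div_assoc, le_div_iff₀ (by linarith)]
    linarith
  have hfin : ∫⁻ x, ‖ψ x‖ₑ ^ (p + 1) ≠ ∞ := by
    have hconv := lintegral_rpow_le_rpow_mul_rpow hψm (a := 2) (b := 2 * p) (v := 1 / 2)
      (w := 1 / 2) (by norm_num) (by linarith) (by norm_num) (by norm_num) (by norm_num)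
    rw [h2, h2p, show 1 / 2 * 2 + 1 / 2 * (2 * p) = p + 1 by ring] at hconv
    exact ne_top_of_le_ne_top (by simp) hconv
  have hGN := lintegral_enorm_rpow_mul_le hψ hr (by linarith) Real.HolderConjugate.two_two hfin
  rw [add_sub_cancel_right, mul_comm p, h2p, ENNReal.one_rpow, one_mul] at hGN
  have hone := (one_le_lintegral_rpow_of_eq_one hψm (by norm_num) (by linarith) horder
    h2 h2p).trans hGN
  have hbase : 1 ≤ ENNReal.ofReal (p + 1) *
      (∫⁻ x, ‖fderiv ℝ ψ x‖ₑ ^ (2 : ℝ)) ^ (1 / 2 : ℝ) := by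
    contrapose! hone
    exact ENNReal.rpow_lt_one hone hr.symm.pos
  have hsq := ENNReal.one_le_rpow hbase two_pos
  rwa [ENNReal.mul_rpow_of_nonneg _ _ two_pos.le, ← ENNReal.rpow_mul,
    one_div_mul_cancel two_ne_zero, ENNReal.rpow_one] at hsq

end Hilbert

theorem opNorm_le_sum_norm_apply_single {𝕜 ι F : Type*} [NontriviallyNormedField 𝕜]
    [Fintype ι] [DecidableEq ι] [SeminormedAddCommGroup F] [NormedSpace 𝕜 F]
    (L : (ι → 𝕜) →L[𝕜] F) :
    ‖L‖ ≤ ∑ i, ‖L (Pi.single i 1)‖ := by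
  refine L.opNorm_le_bound (by positivity) fun x => ?_
  calc ‖L x‖ = ‖∑ i, x i • L (Pi.single i 1)‖ := by
        conv_lhs => rw [pi_eq_sum_univ' x]
        simp only [map_sum, map_smul]
    _ ≤ ∑ i, ‖L (Pi.single i 1)‖ * ‖x‖ := norm_sum_le_of_le _ fun i _ => by
        rw [norm_smul, mul_comm]
        gcongr
        exact norm_le_pi_norm x i
    _ = (∑ i, ‖L (Pi.single i 1)‖) * ‖x‖ := (Finset.sum_mul ..).symm

section Rescaling

variable {E F : Type*} [NormedAddCommGroup E] [NormedSpace ℝ E] [FiniteDimensional ℝ E]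
  [Nontrivial E] [MeasurableSpace E] [BorelSpace E] {μ : Measure E} [μ.IsAddHaarMeasure]
  [NormedAddCommGroup F] [NormedSpace ℝ F]

theorem exists_integral_norm_smul_comp_smul_rpow_eq_one {φ : E → F} {s t : ℝ} (hst : s ≠ t)
    (hs : 0 < ∫ x, ‖φ x‖ ^ s ∂μ) (ht : 0 < ∫ x, ‖φ x‖ ^ t ∂μ) :
    ∃ a b : ℝ, b ≠ 0 ∧ ∫ x, ‖a • φ (b • x)‖ ^ s ∂μ = 1 ∧ ∫ x, ‖a • φ (b • x)‖ ^ t ∂μ = 1 := by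
  set A := ∫ x, ‖φ x‖ ^ s ∂μ
  set B := ∫ x, ‖φ x‖ ^ t ∂μ
  obtain ⟨a, ha, hAB⟩ : ∃ a : ℝ, 0 < a ∧ a ^ s * A = a ^ t * B := by
    refine ⟨(A / B) ^ (t - s)⁻¹, by positivity, ?_⟩
    rw [← sub_add_cancel t s, Real.rpow_add (by positivity), add_sub_cancel_right,
      Real.rpow_inv_rpow (by positivity) (sub_ne_zero.2 hst.symm)]
    field_simp
  obtain ⟨b, hb, hbA⟩ : ∃ b : ℝ, 0 < b ∧ b ^ finrank ℝ E = a ^ s * A :=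
    ⟨(a ^ s * A) ^ ((finrank ℝ E : ℝ)⁻¹), by positivity,
      Real.rpow_inv_natCast_pow (by positivity) finrank_pos.ne'⟩
  have hscale (q : ℝ) : ∫ x, ‖a • φ (b • x)‖ ^ q ∂μ =
      (b ^ finrank ℝ E)⁻¹ * (a ^ q * ∫ x, ‖φ x‖ ^ q ∂μ) := by
    simp_rw [norm_smul, Real.norm_of_nonneg ha.le, Real.mul_rpow ha.le (norm_nonneg _)]
    rw [Measure.integral_comp_smul μ (fun x => a ^ q * ‖φ x‖ ^ q), integral_const_mul,
      abs_of_pos (by positivity), smul_eq_mul]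
  refine ⟨a, b, hb.ne', ?_, ?_⟩
  · rw [hscale, hbA, inv_mul_cancel₀ (by positivity)]
  · rw [hscale, hbA, hAB, inv_mul_cancel₀ (by positivity)]

end Rescaling

section Chi

variable {d : ℕ} {p : ℝ}

theorem norm_fderiv_sq_le_mul_gradNormSq (ψ : (Fin d → ℝ) → ℝ) (x : Fin d → ℝ) :
    ‖fderiv ℝ ψ x‖ ^ 2 ≤ d * gradNormSq ψ x := by
  calc ‖fderiv ℝ ψ x‖ ^ 2 ≤ (∑ i, ‖fderiv ℝ ψ x (Pi.single i 1)‖) ^ 2 := by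
        gcongr
        exact opNorm_le_sum_norm_apply_single _
    _ ≤ d * ∑ i, ‖fderiv ℝ ψ x (Pi.single i 1)‖ ^ 2 := by
        simpa using sq_sum_le_card_mul_sum_sq (s := Finset.univ)
          (f := fun i => ‖fderiv ℝ ψ x (Pi.single i 1)‖)
    _ = d * gradNormSq ψ x := by simp only [gradNormSq, Real.norm_eq_abs, sq_abs]

theorem lintegral_enorm_fderiv_sq_le_ofReal {ψ : (Fin d → ℝ) → ℝ}
    (hψ : Integrable (gradNormSq ψ)) :
    ∫⁻ x, ‖fderiv ℝ ψ x‖ₑ ^ (2 : ℝ) ≤ ENNReal.ofReal (d * ∫ x, gradNormSq ψ x) := by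
  have hle (x : Fin d → ℝ) : 0 ≤ d * gradNormSq ψ x :=
    (sq_nonneg _).trans (norm_fderiv_sq_le_mul_gradNormSq ψ x)
  rw [← integral_const_mul, ofReal_integral_eq_lintegral_ofReal (hψ.const_mul _) (.of_forall hle)]
  gcongr with x
  rw [← ofReal_norm, ENNReal.ofReal_rpow_of_nonneg (norm_nonneg _) two_pos.le, Real.rpow_two]
  exact ENNReal.ofReal_le_ofReal (norm_fderiv_sq_le_mul_gradNormSq ψ x)

theorem one_div_le_of_mem_chiSet (hd : 2 ≤ d) (hp : 1 < p) (hpd : p * ((d : ℝ) - 2) ≤ d)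
    {E : ℝ} (hE : E ∈ chiSet d p) : 1 / (2 * d * (p + 1) ^ 2) ≤ E := by
  obtain ⟨ψ, hψ, hi2, hig, hi2p, h2, h2p, rfl⟩ := hE
  have hψ2 : ∫⁻ x, ‖ψ x‖ₑ ^ (2 : ℝ) = 1 := by
    rw [lintegral_enorm_rpow_eq_ofReal two_pos.le (by simpa using hi2)]
    simp [h2]
  have hψ2p : ∫⁻ x, ‖ψ x‖ₑ ^ (2 * p) = 1 := by
    rw [lintegral_enorm_rpow_eq_ofReal (by linarith) hi2p]
    simp [h2p]
  have hone : 1 ≤ (p + 1) ^ 2 * (d * ∫ x, gradNormSq ψ x) := by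
    rw [← ENNReal.one_le_ofReal, ENNReal.ofReal_mul (by positivity), ← Real.rpow_two,
      ← ENNReal.ofReal_rpow_of_nonneg (by linarith) two_pos.le]
    calc (1 : ℝ≥0∞)
        ≤ ENNReal.ofReal (p + 1) ^ (2 : ℝ) * ∫⁻ x, ‖fderiv ℝ ψ x‖ₑ ^ (2 : ℝ) :=
          one_le_mul_lintegral_enorm_fderiv_sq (by simpa using hd) hψ hp (by simpa using hpd)
            hψ2 hψ2p
      _ ≤ _ := by
          gcongr
          exact lintegral_enorm_fderiv_sq_le_ofReal hig
  rw [div_le_iff₀ (by positivity)]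
  linarith

theorem integrable_gradNormSq {ψ : (Fin d → ℝ) → ℝ} (hψ : ContDiff ℝ 1 ψ)
    (hψs : HasCompactSupport ψ) : Integrable (gradNormSq ψ) := by
  have hψ' : Continuous (fderiv ℝ ψ) := hψ.continuous_fderiv one_ne_zero
  refine Continuous.integrable_of_hasCompactSupport ?_ ?_
  · exact continuous_finsetSum _ fun i _ => (hψ'.clm_apply continuous_const).pow 2
  · exact (hψs.fderiv ℝ).comp_left
      (g := fun L : (Fin d → ℝ) →L[ℝ] ℝ => ∑ i, (L (Pi.single i 1)) ^ 2) (by simp)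

theorem half_integral_gradNormSq_mem_chiSet {ψ : (Fin d → ℝ) → ℝ} (hψ : ContDiff ℝ 1 ψ)
    (hψs : HasCompactSupport ψ) (hp : 0 < p) (h2 : ∫ x, ‖ψ x‖ ^ (2 : ℝ) = 1)
    (h2p : ∫ x, ‖ψ x‖ ^ (2 * p) = 1) : (1 / 2) * ∫ x, gradNormSq ψ x ∈ chiSet d p := by
  have hint {s : ℝ} (hs : 0 < s) : Integrable fun x => ‖ψ x‖ ^ s :=
    (hψ.continuous.norm.rpow_const fun _ => .inr hs.le).integrable_of_hasCompactSupport
      (hψs.norm.rpow_const hs.ne')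
  have hsq : (fun x => ‖ψ x‖ ^ (2 : ℝ)) = fun x => ψ x ^ 2 := by simp
  exact ⟨ψ, hψ.differentiable one_ne_zero, hsq ▸ hint two_pos, integrable_gradNormSq hψ hψs,
    hint (by positivity), hsq ▸ h2, h2p, rfl⟩

theorem chiSet_nonempty (hd : d ≠ 0) (hp : 1 < p) : (chiSet d p).Nonempty := by
  have : NeZero d := ⟨hd⟩
  obtain ⟨φ, hφ, hφs, hφ0⟩ :
      ∃ φ : (Fin d → ℝ) → ℝ, ContDiff ℝ 1 φ ∧ HasCompactSupport φ ∧ φ 0 ≠ 0 := by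
    let bump : ContDiffBump (0 : Fin d → ℝ) := default
    exact ⟨bump, bump.contDiff, bump.hasCompactSupport,
      (bump.pos_of_mem_ball (Metric.mem_ball_self bump.rOut_pos)).ne'⟩
  have hpos {s : ℝ} (hs : 0 < s) : 0 < ∫ x, ‖φ x‖ ^ s := by
    have hcont : Continuous fun x => ‖φ x‖ ^ s :=
      hφ.continuous.norm.rpow_const fun _ => .inr hs.le
    exact hcont.integral_pos_of_hasCompactSupport_nonneg_nonzero
      (hφs.norm.rpow_const hs.ne') (fun x => by positivity) (x := 0) (by positivity)
  obtain ⟨a, b, hb, h2, h2p⟩ := exists_integral_norm_smul_comp_smul_rpow_eq_one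
    (s := 2) (t := 2 * p) (by linarith) (hpos two_pos) (hpos (by linarith))
  have hψ : ContDiff ℝ 1 fun x => a • φ (b • x) := by fun_prop
  have hψs : HasCompactSupport fun x => a • φ (b • x) :=
    (hφs.comp_smul hb).smul_left (f := fun _ => a)
  exact ⟨_, half_integral_gradNormSq_mem_chiSet hψ hψs (by linarith) h2 h2p⟩

theorem chi_pos_general (hd : 2 ≤ d) (hp : 1 < p) (hpd : p * ((d : ℝ) - 2) ≤ d) :
    0 < sInf (chiSet d p) := by
  have hbound : 0 < 1 / (2 * d * (p + 1) ^ 2) := by positivity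
  exact hbound.trans_le (le_csInf (chiSet_nonempty (by lia) hp)
    fun E hE => one_div_le_of_mem_chiSet hd hp hpd hE)

end Chi

/-- For `d ≥ 3` and `1 < p ≤ d/(d-2)` (with conjugate exponent `q`, so `d ≤ 2q`),
the constant `χ_{d,p}` is strictly positive. -/
theorem chi_pos (d : ℕ) (hd : 3 ≤ d) (p q : ℝ) (hp : 1 < p)
    (hpd : p ≤ (d : ℝ) / ((d : ℝ) - 2)) (hq : 1 / p + 1 / q = 1) :
    0 < sInf (chiSet d p) := by
  have hd' : (3 : ℝ) ≤ d := by exact_mod_cast hd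
  exact chi_pos_general (by lia) hp ((le_div_iff₀ (by linarith)).1 hpd)
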